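/- Let (K_{i(e)}, w_e, p_e)_{e∈E} be a contractive Markov system with average contracting rate 0 < a < 1 satisfying the standing assumptions, and suppose its invariant Borel probability measure μ is unique. Let M be the generalized Markov measure on Σ = E^ℤ and S the left shift. Then the Kolmogorov–Sinai entropy of S with respect to M equals h_M(S) = −∑_{e∈E} ∫_{K_{i(e)}} p_e log p_e dμ (with the convention 0 log 0 = 0). -/

import Mathlib

open MeasureTheory Filter ENNReal

/-- The modulus of uniform continuity of a real-valued function on a
(pseudo)metric space, valued in `ℝ≥0∞`. -/
noncomputable def modulus {X : Type*} [PseudoMetricSpace X] (h : X → ℝ) (t : ℝ) : ℝ≥0∞ :=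
  ⨆ (x : X) (y : X) (_ : dist x y ≤ t), ENNReal.ofReal |h x - h y|

/-- A function is Dini-continuous if `∫_0^c φ(t)/t dt < ∞` for some `c > 0`,
where `φ` is its modulus of uniform continuity. -/
def DiniContinuous {X : Type*} [PseudoMetricSpace X] (h : X → ℝ) : Prop :=
  ∃ c > (0 : ℝ), ∫⁻ t in Set.Ioc (0 : ℝ) c, modulus h t / ENNReal.ofReal t < ⊤

/-- A Markov system on a metric space `K`, with vertex set `Fin N` and edge set `E`. -/
structure MarkovSystem (K : Type*) [MetricSpace K] [MeasurableSpace K]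
    (N : ℕ) (E : Type*) [Fintype E] where
  /-- initial vertex of an edge -/
  edgeI : E → Fin N
  /-- terminal vertex of an edge -/
  edgeT : E → Fin N
  /-- the partition `K_1, …, K_N` of `K` -/
  Ki : Fin N → Set K
  Ki_nonempty : ∀ v, (Ki v).Nonempty
  Ki_measurable : ∀ v, MeasurableSet (Ki v)
  Ki_disjoint : ∀ v v', v ≠ v' → Disjoint (Ki v) (Ki v')
  Ki_cover : ∀ x : K, ∃ v, x ∈ Ki v
  /-- the maps `w_e` -/
  w : E → K → K
  w_measurable : ∀ e, Measurable (w e)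
  w_mapsTo : ∀ e, Set.MapsTo (w e) (Ki (edgeI e)) (Ki (edgeT e))
  /-- the probability functions `p_e` -/
  p : E → K → ℝ
  p_measurable : ∀ e, Measurable (p e)
  p_nonneg : ∀ e x, 0 ≤ p e x
  p_sum_one : ∀ x : K, ∑ e, p e x = 1
  p_eq_zero : ∀ e, ∀ x : K, x ∉ Ki (edgeI e) → p e x = 0

namespace MarkovSystem

variable {K : Type*} [MetricSpace K] [MeasurableSpace K] {N : ℕ} {E : Type*} [Fintype E]

/-- Condition of contractiveness on average with rate `a`. -/
def ContractiveOnAvg (sys : MarkovSystem K N E) (a : ℝ) : Prop :=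
  ∀ v : Fin N, ∀ x ∈ sys.Ki v, ∀ y ∈ sys.Ki v,
    ∑ e, sys.p e x * dist (sys.w e x) (sys.w e y) ≤ a * dist x y

/-- `μ` is an invariant Borel probability measure of the Markov system:
`∫ Uf dμ = ∫ f dμ` for every bounded Borel measurable `f`. -/
def IsInvariant (sys : MarkovSystem K N E) (μ : Measure K) : Prop :=
  IsProbabilityMeasure μ ∧
  ∀ f : K → ℝ, Measurable f → (∃ B, ∀ x, |f x| ≤ B) →
    ∫ x, (∑ e, sys.p e x * f (sys.w e x)) ∂μ = ∫ x, f x ∂μ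

end MarkovSystem

/-- `wordProb w p (e₁ :: … :: eₖ) x = p_{e₁}(x) p_{e₂}(w_{e₁}x) ⋯ p_{eₖ}(w_{e_{k-1}} ∘ ⋯ ∘ w_{e₁}x)`. -/
def wordProb {K E : Type*} (w : E → K → K) (p : E → K → ℝ) : List E → K → ℝ
  | [], _ => 1
  | e :: l, x => p e x * wordProb w p l (w e x)

/-- `wordMap w (e₁ :: … :: eₖ) = w_{eₖ} ∘ ⋯ ∘ w_{e₁}`. -/
def wordMap {K E : Type*} (w : E → K → K) : List E → K → K
  | [], x => x
  | e :: l, x => wordMap w l (w e x)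

/-- `M` is the generalized Markov measure on `Σ = E^ℤ` associated with the Markov
system and the invariant measure `μ`. -/
def IsMarkovMeasure {K : Type*} [MetricSpace K] [MeasurableSpace K] {N : ℕ}
    {E : Type*} [Fintype E] [MeasurableSpace E]
    (sys : MarkovSystem K N E) (μ : Measure K) (M : Measure (ℤ → E)) : Prop :=
  IsProbabilityMeasure M ∧
  ∀ (m : ℤ) (es : List E),
    M {σ : ℤ → E | ∀ j : Fin es.length, σ (m + (j : ℕ)) = es.get j}
      = ENNReal.ofReal (∫ x, wordProb sys.w sys.p es x ∂μ)

/-- The left shift on `E^ℤ`. -/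
def shift {E : Type*} (σ : ℤ → E) : ℤ → E := fun k => σ (k + 1)

/-- `comps w σ m = w_{σ₀} ∘ w_{σ₋₁} ∘ ⋯ ∘ w_{σ₋ₘ}`. -/
def comps {K E : Type*} (w : E → K → K) (σ : ℤ → E) : ℕ → K → K
  | 0 => w (σ 0)
  | n + 1 => fun x => comps w σ n (w (σ (-((n : ℤ) + 1))) x)

/-- `F` is the coding map of the contractive Markov system:
`F(σ) = lim_{m → -∞} w_{σ₀} ∘ ⋯ ∘ w_{σₘ} x_{i(σₘ)}` for `M`-a.e. `σ`. -/
def IsCodingMap {K : Type*} [MetricSpace K] [MeasurableSpace K] {N : ℕ}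
    {E : Type*} [Fintype E] [MeasurableSpace E]
    (sys : MarkovSystem K N E) (M : Measure (ℤ → E)) (F : (ℤ → E) → K) : Prop :=
  Measurable F ∧ ∃ xs : Fin N → K, (∀ v, xs v ∈ sys.Ki v) ∧
    ∀ᵐ σ ∂M, Filter.Tendsto
      (fun m : ℕ => comps sys.w σ m (xs (sys.edgeI (σ (-(m : ℤ))))))
      Filter.atTop (nhds (F σ))

/-- Entropy of the finite measurable partition given by the fibers of `π`. -/
noncomputable def partEntropy {Ω : Type*} [MeasurableSpace Ω] (M : Measure Ω)
    {F : Type*} [Fintype F] (π : Ω → F) : ℝ :=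
  -∑ f : F, ((M (π ⁻¹' {f})).toReal * Real.log (M (π ⁻¹' {f})).toReal)

/-- The Kolmogorov–Sinai entropy of a measure-preserving transformation `S`
with respect to `M`: the supremum over all finite measurable partitions `π` of
`inf_n (1/n) H(⋁_{i=0}^{n-1} S^{-i} π)`. -/
noncomputable def ksEntropy {Ω : Type*} [MeasurableSpace Ω] (M : Measure Ω) (S : Ω → Ω) : ℝ≥0∞ :=
  ⨆ (k : ℕ) (π : Ω → Fin k) (_ : ∀ j, MeasurableSet (π ⁻¹' {j})),
    ⨅ n : ℕ, ENNReal.ofReal (((n : ℝ) + 1)⁻¹ *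
      partEntropy M (fun ω => fun j : Fin (n + 1) => π (S^[(j : ℕ)] ω)))

/-!
By Kolmogorov–Sinai, the entropy of the shift is the limit of `H n / n`, where `H n` is the entropy
of the first `n` edges: an arbitrary partition of `E^ℤ` is approximated by one that depends on
finitely many coordinates, and a Fano-type inequality bounds the cost of the approximation by an
arbitrarily small amount per step.

The law of the first `n` edges is the `μ`-mixture of the laws `sys.wordLaw n x` of the random walks
started at the points `x`. By invariance of `μ`, the mean of the entropies of these laws is `n`
times the one-step entropy `-∑ ∫ p_e log p_e dμ`; this bounds `H n` from below by concavity. From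
above, `H n` exceeds this mean by at most `log N` plus the average relative entropy of
`sys.wordLaw n x` with respect to the law started at a reference point `y` of the cell of `x`. The
relative entropy is a sum of one-step terms along the walk, each of them at most `ε + B * dist` by
uniform continuity of the `p_e`; since distances contract on average, the sum is at most
`n * ε + (B / (1 - a)) * dist x y`, that is `o(n)`. The trivial bound `n * |log δ|` allows
integrating this over `x` by dominated convergence.
-/

open scoped Topology
open Function (support)
open Real (negMulLog)

section FiniteEntropy

variable {ι κ : Type*} [Fintype ι] [Fintype κ]

/-- The Shannon entropy of a finite probability vector, in nats. -/
noncomputable def shannonEntropy (P : ι → ℝ) : ℝ := ∑ i, negMulLog (P i)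

/-- The cross entropy of `P` with respect to `Q`, for finite probability vectors. As
`Real.log 0 = 0`, this is the usual (possibly infinite) quantity only if
`support P ⊆ support Q`. -/
noncomputable def crossEntropy (P Q : ι → ℝ) : ℝ := ∑ i, P i * -Real.log (Q i)

/-- The relative entropy (Kullback–Leibler divergence) of `P` with respect to `Q`, for finite
probability vectors; meaningful only if `support P ⊆ support Q`, as for `crossEntropy`. -/
noncomputable def relEntropy (P Q : ι → ℝ) : ℝ := crossEntropy P Q - shannonEntropy P

theorem crossEntropy_self (P : ι → ℝ) : crossEntropy P P = shannonEntropy P := by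
  simp [crossEntropy, shannonEntropy, negMulLog]

theorem abs_negMulLog_le_one {t : ℝ} (ht : t ∈ Set.Icc (0 : ℝ) 1) : |negMulLog t| ≤ 1 := by
  rw [abs_of_nonneg (Real.negMulLog_nonneg ht.1 ht.2)]
  linarith [Real.negMulLog_le_one_sub_self ht.1, ht.1]

theorem shannonEntropy_nonneg {P : ι → ℝ} (hP : P ∈ stdSimplex ℝ ι) : 0 ≤ shannonEntropy P :=
  Finset.sum_nonneg fun i _ =>
    Real.negMulLog_nonneg (mem_Icc_of_mem_stdSimplex hP i).1 (mem_Icc_of_mem_stdSimplex hP i).2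

theorem abs_shannonEntropy_le_card {P : ι → ℝ} (hP : P ∈ stdSimplex ℝ ι) :
    |shannonEntropy P| ≤ Fintype.card ι := by
  calc |shannonEntropy P| ≤ ∑ i, |negMulLog (P i)| := Finset.abs_sum_le_sum_abs _ _
    _ ≤ ∑ _i : ι, 1 :=
      Finset.sum_le_sum fun i _ => abs_negMulLog_le_one (mem_Icc_of_mem_stdSimplex hP i)
    _ = Fintype.card ι := by simp

theorem measurable_shannonEntropy : Measurable (shannonEntropy (ι := ι)) :=
  Finset.measurable_sum _ fun i _ =>
    Real.continuous_negMulLog.measurable.comp (measurable_pi_apply i)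

theorem shannonEntropy_le_crossEntropy {P Q : ι → ℝ} (hP : 0 ≤ P) (hQ : 0 ≤ Q)
    (hPQ : support P ⊆ support Q) (hsum : ∑ i, Q i ≤ ∑ i, P i) :
    shannonEntropy P ≤ crossEntropy P Q := by
  have hterm (i : ι) : negMulLog (P i) ≤ P i * -Real.log (Q i) + (Q i - P i) := by
    rcases eq_or_ne (P i) 0 with h | h
    · simpa [h] using hQ i
    have hp : 0 < P i := (hP i).lt_of_ne' h
    have hq : 0 < Q i := (hQ i).lt_of_ne' (hPQ h)
    have hlog := mul_le_mul_of_nonneg_left (Real.log_le_sub_one_of_pos (div_pos hq hp)) hp.le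
    rw [Real.log_div hq.ne' hp.ne', mul_sub, mul_sub, mul_div_cancel₀ _ h] at hlog
    simp only [negMulLog]
    linarith
  calc shannonEntropy P ≤ ∑ i, (P i * -Real.log (Q i) + (Q i - P i)) :=
        Finset.sum_le_sum fun i _ => hterm i
    _ = crossEntropy P Q + (∑ i, Q i - ∑ i, P i) := by
        rw [Finset.sum_add_distrib, Finset.sum_sub_distrib, crossEntropy]
    _ ≤ crossEntropy P Q := by linarith

theorem relEntropy_nonneg {P Q : ι → ℝ} (hP : P ∈ stdSimplex ℝ ι) (hQ : Q ∈ stdSimplex ℝ ι)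
    (hPQ : support P ⊆ support Q) : 0 ≤ relEntropy P Q :=
  sub_nonneg.2 (shannonEntropy_le_crossEntropy hP.1 hQ.1 hPQ (hQ.2.trans hP.2.symm).le)

theorem crossEntropy_le_add_log {P Q R : ι → ℝ} {c : ℝ} (hP : P ∈ stdSimplex ℝ ι) (hc : 0 < c)
    (hR : ∀ i, P i ≠ 0 → 0 < R i ∧ R i ≤ c * Q i) :
    crossEntropy P Q ≤ crossEntropy P R + Real.log c := by
  calc crossEntropy P Q ≤ ∑ i, (P i * -Real.log (R i) + P i * Real.log c) := by
        refine Finset.sum_le_sum fun i _ => ?_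
        rcases eq_or_ne (P i) 0 with h | h
        · simp [h]
        obtain ⟨hpos, hle⟩ := hR i h
        have hQ : 0 < Q i := pos_of_mul_pos_right (hpos.trans_le hle) hc.le
        have hlog := Real.log_le_log hpos hle
        rw [Real.log_mul hc.ne' hQ.ne'] at hlog
        rw [← mul_add]
        exact mul_le_mul_of_nonneg_left (by linarith) (hP.1 i)
    _ = crossEntropy P R + Real.log c := by
        rw [Finset.sum_add_distrib, ← Finset.sum_mul, hP.2, one_mul, crossEntropy]

theorem relEntropy_le_of_forall_log_sub_log_le {P Q : ι → ℝ} {B : ℝ} (hP : P ∈ stdSimplex ℝ ι)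
    (hB : ∀ i, P i ≠ 0 → Real.log (P i) - Real.log (Q i) ≤ B) : relEntropy P Q ≤ B := by
  calc relEntropy P Q = ∑ i, P i * (Real.log (P i) - Real.log (Q i)) := by
        rw [relEntropy, crossEntropy, shannonEntropy, ← Finset.sum_sub_distrib]
        refine Finset.sum_congr rfl fun i _ => ?_
        rw [negMulLog]
        ring
    _ ≤ ∑ i, P i * B := by
        refine Finset.sum_le_sum fun i _ => ?_
        rcases eq_or_ne (P i) 0 with h | h
        · simp [h]
        · exact mul_le_mul_of_nonneg_left (hB i h) (hP.1 i)
    _ = B := by rw [← Finset.sum_mul, hP.2, one_mul]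

theorem crossEntropy_comp_equiv (σ : κ ≃ ι) (P Q : ι → ℝ) :
    crossEntropy (P ∘ σ) (Q ∘ σ) = crossEntropy P Q :=
  Equiv.sum_comp σ fun i => P i * -Real.log (Q i)

theorem shannonEntropy_comp_equiv (σ : κ ≃ ι) (P : ι → ℝ) :
    shannonEntropy (P ∘ σ) = shannonEntropy P :=
  Equiv.sum_comp σ fun i => negMulLog (P i)

theorem relEntropy_comp_equiv (σ : κ ≃ ι) (P Q : ι → ℝ) :
    relEntropy (P ∘ σ) (Q ∘ σ) = relEntropy P Q := by
  rw [relEntropy, relEntropy, crossEntropy_comp_equiv, shannonEntropy_comp_equiv]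

theorem crossEntropy_chain {P P' : ι → ℝ} {Q Q' : ι → κ → ℝ} (hQ : ∀ i, ∑ j, Q i j = 1)
    (hPP' : support P ⊆ support P') (hQQ' : ∀ i ∈ support P, support (Q i) ⊆ support (Q' i)) :
    crossEntropy (fun z : ι × κ => P z.1 * Q z.1 z.2) (fun z => P' z.1 * Q' z.1 z.2) =
      crossEntropy P P' + ∑ i, P i * crossEntropy (Q i) (Q' i) := by
  have hterm (i : ι) (j : κ) : P i * Q i j * -Real.log (P' i * Q' i j) =
      Q i j * (P i * -Real.log (P' i)) + P i * (Q i j * -Real.log (Q' i j)) := by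
    rcases eq_or_ne (P i) 0 with hi | hi
    · simp [hi]
    rcases eq_or_ne (Q i j) 0 with hj | hj
    · simp [hj]
    rw [Real.log_mul (hPP' hi) (hQQ' i hi hj)]
    ring
  simp_rw [crossEntropy, Fintype.sum_prod_type, hterm, Finset.sum_add_distrib, ← Finset.sum_mul,
    hQ, one_mul, ← Finset.mul_sum]

theorem shannonEntropy_chain {P : ι → ℝ} {Q : ι → κ → ℝ} (hQ : ∀ i, ∑ j, Q i j = 1) :
    shannonEntropy (fun z : ι × κ => P z.1 * Q z.1 z.2) =
      shannonEntropy P + ∑ i, P i * shannonEntropy (Q i) := by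
  simp_rw [← crossEntropy_self]
  exact crossEntropy_chain hQ subset_rfl fun _ _ => subset_rfl

theorem relEntropy_chain {P P' : ι → ℝ} {Q Q' : ι → κ → ℝ} (hQ : ∀ i, ∑ j, Q i j = 1)
    (hPP' : support P ⊆ support P') (hQQ' : ∀ i ∈ support P, support (Q i) ⊆ support (Q' i)) :
    relEntropy (fun z : ι × κ => P z.1 * Q z.1 z.2) (fun z => P' z.1 * Q' z.1 z.2) =
      relEntropy P P' + ∑ i, P i * relEntropy (Q i) (Q' i) := by
  simp_rw [relEntropy, crossEntropy_chain hQ hPP' hQQ', shannonEntropy_chain hQ, mul_sub,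
    Finset.sum_sub_distrib]
  ring

theorem exists_mem_stdSimplex_forall_le_card_mul [Nonempty κ] {R : κ → ι → ℝ}
    (hR : ∀ v, R v ∈ stdSimplex ℝ ι) :
    ∃ Q ∈ stdSimplex ℝ ι, ∀ v i, R v i ≤ Fintype.card κ * Q i := by
  have hκ : (Fintype.card κ : ℝ) ≠ 0 := by exact_mod_cast Fintype.card_ne_zero
  refine ⟨fun i => (Fintype.card κ : ℝ)⁻¹ * ∑ v, R v i, ⟨fun i => ?_, ?_⟩, fun v i => ?_⟩
  · exact mul_nonneg (by positivity) (Finset.sum_nonneg fun v _ => (hR v).1 i)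
  · rw [← Finset.mul_sum, Finset.sum_comm]
    simp [(hR _).2, hκ]
  · rw [mul_inv_cancel_left₀ hκ]
    exact Finset.single_le_sum (f := fun v => R v i) (fun v _ => (hR v).1 i) (Finset.mem_univ v)

end FiniteEntropy

theorem support_integral_subset {X ι : Type*} [MeasurableSpace X] {μ : Measure X} {P : X → ι → ℝ}
    {Q : ι → ℝ} (h : ∀ x, support (P x) ⊆ support Q) :
    support (fun i => ∫ x, P x i ∂μ) ⊆ support Q := by
  refine fun i hi hQi => hi (integral_eq_zero_of_ae (ae_of_all _ fun x => ?_))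
  by_contra hx
  exact h x hx hQi

section Mixture

variable {X ι κ : Type*} [MeasurableSpace X] [Fintype ι] [MeasurableSpace κ]
  [MeasurableSingletonClass κ] {μ : Measure X} {P : X → ι → ℝ} {R : κ → ι → ℝ} {c : X → κ}

theorem integrable_apply_of_mem_stdSimplex [IsFiniteMeasure μ] (hPm : Measurable P)
    (hP : ∀ x, P x ∈ stdSimplex ℝ ι) (i : ι) : Integrable (fun x => P x i) μ :=
  Integrable.of_bound ((measurable_pi_iff.1 hPm i).aestronglyMeasurable) 1 <| ae_of_all _ fun x =>
    (Real.norm_of_nonneg ((hP x).1 i)).trans_le (mem_Icc_of_mem_stdSimplex (hP x) i).2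

theorem integrable_negMulLog_of_mem_stdSimplex [IsFiniteMeasure μ] (hPm : Measurable P)
    (hP : ∀ x, P x ∈ stdSimplex ℝ ι) (i : ι) : Integrable (fun x => negMulLog (P x i)) μ :=
  Integrable.of_bound
    (Real.continuous_negMulLog.measurable.comp (measurable_pi_iff.1 hPm i)).aestronglyMeasurable 1
    (ae_of_all _ fun x => abs_negMulLog_le_one (mem_Icc_of_mem_stdSimplex (hP x) i))

theorem integrable_shannonEntropy [IsFiniteMeasure μ] (hPm : Measurable P)
    (hP : ∀ x, P x ∈ stdSimplex ℝ ι) : Integrable (fun x => shannonEntropy (P x)) μ :=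
  integrable_finsetSum _ fun i _ => integrable_negMulLog_of_mem_stdSimplex hPm hP i

theorem integrable_crossEntropy [Finite κ] [IsFiniteMeasure μ] (hPm : Measurable P)
    (hP : ∀ x, P x ∈ stdSimplex ℝ ι) (hc : Measurable c) :
    Integrable (fun x => crossEntropy (P x) (R (c x))) μ := by
  refine integrable_finsetSum _ fun i _ => ?_
  have hlog : Integrable (fun x => -Real.log (R (c x) i)) μ :=
    (Integrable.of_finite (f := fun v => -Real.log (R v i))).comp_measurable hc
  exact hlog.bdd_mul (measurable_pi_iff.1 hPm i).aestronglyMeasurable <| ae_of_all _ fun x =>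
    (Real.norm_of_nonneg ((hP x).1 i)).trans_le (mem_Icc_of_mem_stdSimplex (hP x) i).2

theorem integrable_relEntropy [Finite κ] [IsFiniteMeasure μ] (hPm : Measurable P)
    (hP : ∀ x, P x ∈ stdSimplex ℝ ι) (hc : Measurable c) :
    Integrable (fun x => relEntropy (P x) (R (c x))) μ :=
  (integrable_crossEntropy hPm hP hc).sub (integrable_shannonEntropy hPm hP)

variable [IsProbabilityMeasure μ]

theorem integral_shannonEntropy_le (hPm : Measurable P) (hP : ∀ x, P x ∈ stdSimplex ℝ ι) :
    ∫ x, shannonEntropy (P x) ∂μ ≤ shannonEntropy fun i => ∫ x, P x i ∂μ := by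
  simp only [shannonEntropy]
  rw [integral_finsetSum _ fun i _ => integrable_negMulLog_of_mem_stdSimplex hPm hP i]
  exact Finset.sum_le_sum fun i _ => Real.concaveOn_negMulLog.le_map_integral
    Real.continuous_negMulLog.continuousOn isClosed_Ici (ae_of_all _ fun x => (hP x).1 i)
    (integrable_apply_of_mem_stdSimplex hPm hP i) (integrable_negMulLog_of_mem_stdSimplex hPm hP i)

theorem integral_mem_stdSimplex (hPm : Measurable P) (hP : ∀ x, P x ∈ stdSimplex ℝ ι) :
    (fun i => ∫ x, P x i ∂μ) ∈ stdSimplex ℝ ι := by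
  refine ⟨fun i => integral_nonneg fun x => (hP x).1 i, ?_⟩
  rw [← integral_finsetSum _ fun i _ => integrable_apply_of_mem_stdSimplex hPm hP i]
  simp [(hP _).2]

theorem crossEntropy_integral (hPm : Measurable P) (hP : ∀ x, P x ∈ stdSimplex ℝ ι) (Q : ι → ℝ) :
    crossEntropy (fun i => ∫ x, P x i ∂μ) Q = ∫ x, crossEntropy (P x) Q ∂μ := by
  simp only [crossEntropy]
  rw [integral_finsetSum _ fun i _ =>
    (integrable_apply_of_mem_stdSimplex hPm hP i).mul_const _]
  simp_rw [integral_mul_const]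

-- The mixture is compared with the uniform average `Q` of the vectors `R v`, using that
-- `R v ≤ |κ| Q` for every `v`.
theorem shannonEntropy_integral_le [Fintype κ] (hPm : Measurable P)
    (hP : ∀ x, P x ∈ stdSimplex ℝ ι) (hR : ∀ v, R v ∈ stdSimplex ℝ ι)
    (hc : Measurable c) (hPR : ∀ x, support (P x) ⊆ support (R (c x))) :
    shannonEntropy (fun i => ∫ x, P x i ∂μ) ≤
      ∫ x, shannonEntropy (P x) ∂μ + ∫ x, relEntropy (P x) (R (c x)) ∂μ +
        Real.log (Fintype.card κ) := by
  have : Nonempty κ := μ.nonempty_of_neZero.map c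
  have hκ : 0 < (Fintype.card κ : ℝ) := by exact_mod_cast Fintype.card_pos
  obtain ⟨Q, hQ, hRQ⟩ := exists_mem_stdSimplex_forall_le_card_mul hR
  have hRpos (x : X) (i : ι) (h : P x i ≠ 0) : 0 < R (c x) i := ((hR _).1 i).lt_of_ne' (hPR x h)
  have hPQ (x : X) : support (P x) ⊆ support Q := fun i hi =>
    (pos_of_mul_pos_right ((hRpos x i hi).trans_le (hRQ _ i)) hκ.le).ne'
  have hmean := integral_mem_stdSimplex (μ := μ) hPm hP
  have hcross := integrable_crossEntropy (μ := μ) (R := R) hPm hP hc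
  calc shannonEntropy (fun i => ∫ x, P x i ∂μ)
      ≤ crossEntropy (fun i => ∫ x, P x i ∂μ) Q :=
        shannonEntropy_le_crossEntropy hmean.1 hQ.1 (support_integral_subset hPQ)
          (hQ.2.trans hmean.2.symm).le
    _ = ∫ x, crossEntropy (P x) Q ∂μ := crossEntropy_integral hPm hP Q
    _ ≤ ∫ x, (crossEntropy (P x) (R (c x)) + Real.log (Fintype.card κ)) ∂μ := by
        refine integral_mono (integrable_crossEntropy (R := fun _ : κ => Q) hPm hP hc)
          (hcross.add (integrable_const _)) fun x => ?_
        exact crossEntropy_le_add_log (hP x) hκ fun i hi => ⟨hRpos x i hi, hRQ _ i⟩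
    _ = ∫ x, shannonEntropy (P x) ∂μ + ∫ x, relEntropy (P x) (R (c x)) ∂μ +
          Real.log (Fintype.card κ) := by
        rw [integral_add hcross (integrable_const _), integral_const, probReal_univ, one_smul]
        simp only [relEntropy]
        rw [integral_sub hcross (integrable_shannonEntropy hPm hP), add_sub_cancel]

end Mixture

section PartitionEntropy

variable {Ω A B : Type*} [MeasurableSpace Ω] {M : Measure Ω}

theorem ae_measureReal_fiber_pos [Countable A] [IsFiniteMeasure M] (X : Ω → A) :
    ∀ᵐ ω ∂M, 0 < M.real (X ⁻¹' {X ω}) := by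
  have hnull : ∀ᵐ ω ∂M, ∀ a, M.real (X ⁻¹' {a}) = 0 → X ω ≠ a :=
    ae_all_iff.2 fun a => eventually_imp_distrib_left.2 fun h =>
      measure_eq_zero_iff_ae_notMem.1 ((measureReal_eq_zero_iff (by finiteness)).1 h)
  filter_upwards [hnull] with ω hω
  exact measureReal_nonneg.lt_of_ne' fun h => hω _ h rfl

theorem integrable_comp_of_finite [Finite A] [MeasurableSpace A] [MeasurableSingletonClass A]
    [IsFiniteMeasure M] {X : Ω → A} (hX : Measurable X) (g : A → ℝ) :
    Integrable (fun ω => g (X ω)) M :=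
  Integrable.of_finite.comp_measurable hX

variable [Fintype A] [Fintype B]

theorem partEntropy_eq_shannonEntropy (M : Measure Ω) (X : Ω → A) :
    partEntropy M X = shannonEntropy fun a => M.real (X ⁻¹' {a}) := by
  simp only [partEntropy, shannonEntropy, negMulLog, Measure.real, neg_mul, Finset.sum_neg_distrib]

variable [MeasurableSpace A] [MeasurableSingletonClass A] [MeasurableSpace B]
  [MeasurableSingletonClass B] {X : Ω → A} {Y : Ω → B}

theorem partEntropy_comp {S : Ω → Ω} (hS : MeasurePreserving S M M) (hX : Measurable X) :
    partEntropy M (X ∘ S) = partEntropy M X := by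
  simp only [partEntropy, Set.preimage_comp,
    hS.measure_preimage (hX (measurableSet_singleton _)).nullMeasurableSet]

theorem integral_comp_eq_sum [IsFiniteMeasure M] (hX : Measurable X) (g : A → ℝ) :
    ∫ ω, g (X ω) ∂M = ∑ a, M.real (X ⁻¹' {a}) * g a := by
  rw [← integral_map hX.aemeasurable Integrable.of_finite.aestronglyMeasurable,
    integral_fintype Integrable.of_finite]
  simp_rw [map_measureReal_apply hX (measurableSet_singleton _), smul_eq_mul]

variable [IsProbabilityMeasure M]

theorem measureReal_fiber_mem_stdSimplex (hX : Measurable X) :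
    (fun a => M.real (X ⁻¹' {a})) ∈ stdSimplex ℝ A :=
  ⟨fun _ => measureReal_nonneg, by simpa using (integral_comp_eq_sum (M := M) hX 1).symm⟩

theorem partEntropy_eq_integral (hX : Measurable X) :
    partEntropy M X = ∫ ω, -Real.log (M.real (X ⁻¹' {X ω})) ∂M := by
  rw [integral_comp_eq_sum hX fun a => -Real.log (M.real (X ⁻¹' {a})),
    partEntropy_eq_shannonEntropy, ← crossEntropy_self, crossEntropy]

theorem partEntropy_le_integral_neg_log (hX : Measurable X) {q : A → ℝ} (hq : 0 ≤ q)
    (hsum : ∑ a, q a ≤ 1) (hpos : ∀ᵐ ω ∂M, 0 < q (X ω)) :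
    partEntropy M X ≤ ∫ ω, -Real.log (q (X ω)) ∂M := by
  have hlaw := measureReal_fiber_mem_stdSimplex (M := M) hX
  rw [partEntropy_eq_shannonEntropy, integral_comp_eq_sum hX fun a => -Real.log (q a)]
  refine shannonEntropy_le_crossEntropy hlaw.1 hq (fun a ha hqa => ha ?_)
    (hsum.trans_eq hlaw.2.symm)
  refine (measureReal_eq_zero_iff (by finiteness)).2 (measure_eq_zero_iff_ae_notMem.2 ?_)
  filter_upwards [hpos] with ω hω hXω
  exact hω.ne' (hqa ▸ congrArg q hXω)

theorem partEntropy_le_of_factorsThrough (hX : Measurable X) (hY : Measurable Y)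
    (h : X.FactorsThrough Y) : partEntropy M X ≤ partEntropy M Y := by
  rw [partEntropy_eq_integral hX, partEntropy_eq_integral hY]
  refine integral_mono_ae (integrable_comp_of_finite hX fun a => -Real.log (M.real (X ⁻¹' {a})))
    (integrable_comp_of_finite hY fun b => -Real.log (M.real (Y ⁻¹' {b}))) ?_
  filter_upwards [ae_measureReal_fiber_pos (M := M) Y] with ω hω
  exact neg_le_neg (Real.log_le_log hω (measureReal_mono fun ω' hω' => h hω'))

-- Gibbs' inequality: `q b` is the code used for the value of `X` once `Y = b` is known.
theorem partEntropy_prodMk_le (hX : Measurable X) (hY : Measurable Y) {q : B → A → ℝ}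
    (hq : ∀ b, 0 ≤ q b) (hsum : ∀ b, ∑ a, q b a ≤ 1) (hpos : ∀ᵐ ω ∂M, 0 < q (Y ω) (X ω)) :
    partEntropy M (fun ω => (X ω, Y ω)) ≤
      partEntropy M Y + ∫ ω, -Real.log (q (Y ω) (X ω)) ∂M := by
  have hlaw := measureReal_fiber_mem_stdSimplex (M := M) hY
  set Q : A × B → ℝ := fun z => M.real (Y ⁻¹' {z.2}) * q z.2 z.1
  have hQsum : ∑ z, Q z ≤ 1 := by
    rw [Fintype.sum_prod_type_right, ← hlaw.2]
    simp only [Q, ← Finset.mul_sum]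
    exact Finset.sum_le_sum fun b _ => mul_le_of_le_one_right (hlaw.1 b) (hsum b)
  have hQpos : ∀ᵐ ω ∂M, 0 < Q (X ω, Y ω) := by
    filter_upwards [ae_measureReal_fiber_pos (M := M) Y, hpos] with ω h₁ h₂ using mul_pos h₁ h₂
  calc partEntropy M (fun ω => (X ω, Y ω))
      ≤ ∫ ω, -Real.log (Q (X ω, Y ω)) ∂M := partEntropy_le_integral_neg_log (hX.prodMk hY)
        (fun z => mul_nonneg (hlaw.1 z.2) (hq z.2 z.1)) hQsum hQpos
    _ = ∫ ω, (-Real.log (M.real (Y ⁻¹' {Y ω})) + -Real.log (q (Y ω) (X ω))) ∂M := by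
        refine integral_congr_ae ?_
        filter_upwards [ae_measureReal_fiber_pos (M := M) Y, hpos] with ω h₁ h₂
        rw [Real.log_mul h₁.ne' h₂.ne', neg_add]
    _ = partEntropy M Y + ∫ ω, -Real.log (q (Y ω) (X ω)) ∂M := by
        rw [integral_add (integrable_comp_of_finite hY fun b => -Real.log (M.real (Y ⁻¹' {b})))
          (integrable_comp_of_finite (hX.prodMk hY) fun z => -Real.log (q z.2 z.1)),
          ← partEntropy_eq_integral hY]

theorem partEntropy_prodMk_le_add (hX : Measurable X) (hY : Measurable Y) :
    partEntropy M (fun ω => (X ω, Y ω)) ≤ partEntropy M X + partEntropy M Y := by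
  have hlaw := measureReal_fiber_mem_stdSimplex (M := M) hX
  rw [partEntropy_eq_integral hX, add_comm]
  exact partEntropy_prodMk_le hX hY (q := fun _ a => M.real (X ⁻¹' {a})) (fun _ => hlaw.1)
    (fun _ => hlaw.2.le) (ae_measureReal_fiber_pos X)

end PartitionEntropy

section Fano

variable {Ω ι κ : Type*} [MeasurableSpace Ω] {M : Measure Ω} [Fintype ι] [Fintype κ]
  {ε : ℝ}

open Classical in
/-- The transition kernel of a noisy channel on `κ` that gives every wrong symbol `ε` times the
weight of the right one. -/
noncomputable def noisyKernel (ε : ℝ) (k l : κ) : ℝ :=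
  (if k = l then 1 else ε) / (1 + Fintype.card κ * ε)

theorem noisyKernel_pos (hε : 0 < ε) (k l : κ) : 0 < noisyKernel ε k l := by
  unfold noisyKernel
  split_ifs <;> positivity

theorem sum_noisyKernel_le_one (hε : 0 < ε) (k : κ) : ∑ l, noisyKernel ε k l ≤ 1 := by
  classical
  simp only [noisyKernel, ← Finset.sum_div]
  refine div_le_one_of_le₀ ?_ (by positivity)
  calc ∑ l, (if k = l then 1 else ε) ≤ ∑ l, ((if k = l then 1 else 0) + ε) :=
        Finset.sum_le_sum fun l _ => by split_ifs <;> linarith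
    _ = 1 + Fintype.card κ * ε := by simp [Finset.sum_add_distrib]

open Classical in
theorem neg_log_noisyKernel (hε : 0 < ε) (k l : κ) :
    -Real.log (noisyKernel ε k l) =
      Real.log (1 + Fintype.card κ * ε) + if k = l then 0 else -Real.log ε := by
  have hden : (1 + Fintype.card κ * ε : ℝ) ≠ 0 := by positivity
  unfold noisyKernel
  split_ifs
  · simp
  · rw [Real.log_div hε.ne' hden]
    ring

variable [IsProbabilityMeasure M] [MeasurableSpace κ] [MeasurableSingletonClass κ]

theorem integral_neg_log_noisyKernel {X Y : Ω → κ} (hX : Measurable X) (hY : Measurable Y)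
    (hε : 0 < ε) :
    ∫ ω, -Real.log (noisyKernel ε (Y ω) (X ω)) ∂M =
      Real.log (1 + Fintype.card κ * ε) + M.real {ω | X ω ≠ Y ω} * -Real.log ε := by
  classical
  have hset : MeasurableSet {ω | X ω ≠ Y ω} := (measurableSet_eq_fun hX hY).compl
  have hind (ω : Ω) : (if Y ω = X ω then 0 else -Real.log ε) =
      {ω | X ω ≠ Y ω}.indicator (fun _ => -Real.log ε) ω := by
    simp [Set.indicator_apply, eq_comm]
  simp only [neg_log_noisyKernel hε, hind]
  rw [integral_add (integrable_const _) ((integrable_const _).indicator hset),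
    integral_indicator_const _ hset]
  simp

-- A Fano-type inequality: `Y` passed through the noisy channel is used to encode `X`.
theorem partEntropy_pi_le_add_sum [DecidableEq ι] {X Y : Ω → ι → κ} (hX : Measurable X)
    (hY : Measurable Y) (hε : 0 < ε) :
    partEntropy M X ≤ partEntropy M Y + ∑ j, (Real.log (1 + Fintype.card κ * ε) +
      M.real {ω | X ω j ≠ Y ω j} * -Real.log ε) := by
  have hXj (j : ι) : Measurable fun ω => X ω j := measurable_pi_iff.1 hX j
  have hYj (j : ι) : Measurable fun ω => Y ω j := measurable_pi_iff.1 hY j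
  set q : (ι → κ) → (ι → κ) → ℝ := fun y x => ∏ j, noisyKernel ε (y j) (x j)
  have hqpos (y x : ι → κ) : 0 < q y x := Finset.prod_pos fun j _ => noisyKernel_pos hε _ _
  have hqsum (y : ι → κ) : ∑ x, q y x ≤ 1 := by
    classical
    rw [← Fintype.prod_sum]
    exact Finset.prod_le_one (fun j _ => Finset.sum_nonneg fun l _ => (noisyKernel_pos hε _ l).le)
      fun _ _ => sum_noisyKernel_le_one hε _
  calc partEntropy M X ≤ partEntropy M (fun ω => (X ω, Y ω)) :=
        partEntropy_le_of_factorsThrough hX (hX.prodMk hY) fun _ _ h => congrArg Prod.fst h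
    _ ≤ partEntropy M Y + ∫ ω, -Real.log (q (Y ω) (X ω)) ∂M := partEntropy_prodMk_le hX hY
        (fun y x => (hqpos y x).le) hqsum (ae_of_all _ fun ω => hqpos _ _)
    _ = partEntropy M Y + ∑ j, (Real.log (1 + Fintype.card κ * ε) +
          M.real {ω | X ω j ≠ Y ω j} * -Real.log ε) := by
        simp only [q, Real.log_prod fun _ _ => (noisyKernel_pos hε _ _).ne',
          ← Finset.sum_neg_distrib]
        rw [integral_finsetSum _ fun j _ => integrable_comp_of_finite ((hXj j).prodMk (hYj j))
          fun z => -Real.log (noisyKernel ε z.2 z.1)]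
        exact congrArg _ (Finset.sum_congr rfl fun j _ =>
          integral_neg_log_noisyKernel (hXj j) (hYj j) hε)

end Fano

section CylinderApproximation

variable {ι : Type*} {α : ι → Type*} [∀ i, MeasurableSpace (α i)]

open scoped symmDiff in
theorem exists_mem_measurableCylinders_measureReal_symmDiff_le (M : Measure (∀ i, α i))
    [IsFiniteMeasure M] {A : Set (∀ i, α i)} (hA : MeasurableSet A) {η : ℝ} (hη : 0 < η) :
    ∃ C ∈ measurableCylinders α, M.real (A ∆ C) ≤ η := by
  obtain ⟨C, hC, hAC⟩ := (Measure.MeasureDense.of_generateFrom_isSetAlgebra_finite M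
    isSetAlgebra_measurableCylinders generateFrom_measurableCylinders.symm).approx A hA
    (measure_ne_top M A) η hη
  exact ⟨C, hC, ENNReal.toReal_le_of_le_ofReal hη.le hAC.le⟩

open scoped symmDiff in
theorem exists_dependsOn_measureReal_ne_le {κ : Type*} [Finite κ] [Nonempty κ]
    [MeasurableSpace κ] [MeasurableSingletonClass κ] (M : Measure (∀ i, α i)) [IsFiniteMeasure M]
    {π : (∀ i, α i) → κ} (hπ : Measurable π) {η : ℝ} (hη : 0 < η) :
    ∃ (I : Finset ι) (π' : (∀ i, α i) → κ), Measurable π' ∧ DependsOn π' I ∧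
      M.real {σ | π σ ≠ π' σ} ≤ η := by
  classical
  cases nonempty_fintype κ
  have hcard : 0 < (Fintype.card κ : ℝ) := by exact_mod_cast Fintype.card_pos
  choose C hC hπC using fun k => exists_mem_measurableCylinders_measureReal_symmDiff_le M
    (hπ (measurableSet_singleton k)) (div_pos hη hcard)
  choose J T _ hJT using fun k => (mem_measurableCylinders (C k)).1 (hC k)
  -- Off the union of the symmetric differences, `σ` lies in `C k` for `k = π σ` only.
  refine ⟨Finset.univ.biUnion J, fun σ => Classical.epsilon fun k => σ ∈ C k, ?_, ?_, ?_⟩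
  · exact (measurable_of_finite (Classical.epsilon : (κ → Prop) → κ)).comp <|
      measurable_pi_iff.2 fun k => measurableSet_setOfPred.1 (.of_mem_measurableCylinders (hC k))
  · intro σ τ hστ
    have hrestrict (k : κ) : (J k).restrict σ = (J k).restrict τ := funext fun i =>
      hστ i (Finset.mem_biUnion.2 ⟨k, Finset.mem_univ k, i.2⟩)
    simp only [hJT, mem_cylinder, hrestrict]
  · calc M.real {σ | π σ ≠ Classical.epsilon fun k => σ ∈ C k}
        ≤ M.real (⋃ k, (π ⁻¹' {k}) ∆ C k) := measureReal_mono fun σ hσ => by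
          by_contra h
          simp only [Set.mem_iUnion, Set.mem_symmDiff, not_exists] at h
          have hmem (k : κ) : σ ∈ C k ↔ k = π σ := by
            have := h k
            simp only [Set.mem_preimage, Set.mem_singleton_iff] at this
            grind
          exact hσ (by simp only [hmem, Classical.epsilon_singleton])
      _ ≤ ∑ k, M.real ((π ⁻¹' {k}) ∆ C k) := measureReal_iUnion_fintype_le _
      _ ≤ ∑ _k : κ, η / Fintype.card κ := Finset.sum_le_sum fun k _ => hπC k
      _ = η := by simp [mul_div_cancel₀, hcard.ne']

end CylinderApproximation

section Subword

variable {E : Type*}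

/-- The word of length `n` read from the bi-infinite sequence `σ` starting at position `s`. -/
def subword (s : ℤ) (n : ℕ) (σ : ℤ → E) : Fin n → E := fun i => σ (s + (i : ℕ))

theorem subword_eq_iff {s : ℤ} {n : ℕ} {σ τ : ℤ → E} :
    subword s n σ = subword s n τ ↔ ∀ i, s ≤ i → i < s + n → σ i = τ i := by
  refine ⟨fun h i hsi hin => ?_, fun h => funext fun i => h _ (by omega) (by omega)⟩
  simpa [subword, hsi] using congrFun h ⟨(i - s).toNat, by omega⟩

theorem shift_iterate_apply (j : ℕ) (σ : ℤ → E) (i : ℤ) : shift^[j] σ i = σ (i + j) := by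
  induction j generalizing σ with
  | zero => simp
  | succ j ih =>
    rw [Function.iterate_succ_apply, ih, shift]
    push_cast
    ring_nf

theorem subword_shift (s : ℤ) (n : ℕ) (σ : ℤ → E) :
    subword s n (shift σ) = subword (s + 1) n σ := by
  funext i
  simp only [subword, shift]
  ring_nf

variable [MeasurableSpace E]

theorem measurable_subword (s : ℤ) (n : ℕ) : Measurable (subword (E := E) s n) :=
  measurable_pi_iff.2 fun _ => measurable_pi_apply _

theorem measurable_shift : Measurable (shift (E := E)) :=
  measurable_pi_iff.2 fun _ => measurable_pi_apply _

theorem exists_restrict_eq_comp_subword (I : Finset ℤ) :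
    ∃ (s : ℤ) (n : ℕ) (r : (Fin n → E) → I → E), Measurable r ∧ I.restrict = r ∘ subword s n := by
  obtain ⟨s, hs⟩ := I.bddBelow
  obtain ⟨t, ht⟩ := I.bddAbove
  have hsi (i : I) : s ≤ i := hs i.2
  have hit (i : I) : ((i : ℤ) - s).toNat < (t - s).toNat + 1 := by
    have := hsi i
    have : (i : ℤ) ≤ t := ht i.2
    omega
  refine ⟨s, (t - s).toNat + 1, fun f i => f ⟨((i : ℤ) - s).toNat, hit i⟩,
    measurable_pi_iff.2 fun i => measurable_pi_apply _, ?_⟩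
  funext σ i
  simp [subword, hsi i]

theorem measurePreserving_shift_of_map_subword {M : Measure (ℤ → E)} [IsFiniteMeasure M]
    (h : ∀ s n, M.map (subword (s + 1) n) = M.map (subword s n)) :
    MeasurePreserving shift M M := by
  refine ⟨measurable_shift, IsProjectiveLimit.unique (P := fun I => M.map I.restrict)
    (fun I => ?_) fun I => rfl⟩
  obtain ⟨s, n, r, hr, hI⟩ := exists_restrict_eq_comp_subword (E := E) I
  have hshift : subword (E := E) s n ∘ shift = subword (s + 1) n := funext (subword_shift s n)
  rw [hI, ← Measure.map_map hr (measurable_subword s n),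
    Measure.map_map (measurable_subword s n) measurable_shift, hshift, h,
    Measure.map_map hr (measurable_subword s n), ← hI]

end Subword

section KolmogorovSinai

/-- The first `n` labels that the orbit of `ω` under `S` receives from the partition `π`. -/
def itinerary {Ω F : Type*} (S : Ω → Ω) (π : Ω → F) (n : ℕ) (ω : Ω) : Fin n → F :=
  fun j => π (S^[j] ω)

theorem measurable_itinerary {Ω F : Type*} [MeasurableSpace Ω] [MeasurableSpace F] {S : Ω → Ω}
    {π : Ω → F} (hS : Measurable S) (hπ : Measurable π) (n : ℕ) : Measurable (itinerary S π n) :=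
  measurable_pi_iff.2 fun j => hπ.comp (hS.iterate j)

theorem tendsto_log_add_mul_neg_log (c : ℝ) :
    Tendsto (fun θ : ℝ => Real.log (1 + c * θ) + θ * -Real.log θ) (𝓝[>] 0) (𝓝 0) := by
  have hlog : ContinuousAt (fun θ : ℝ => Real.log (1 + c * θ)) 0 :=
    (by fun_prop : ContinuousAt (fun θ : ℝ => 1 + c * θ) 0).log (by simp)
  have hsum : ContinuousAt (fun θ : ℝ => Real.log (1 + c * θ) + negMulLog θ) 0 :=
    hlog.add Real.continuous_negMulLog.continuousAt
  simpa [ContinuousAt, negMulLog] using hsum.tendsto.mono_left nhdsWithin_le_nhds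

theorem tendsto_inv_mul_comp_add {u : ℕ → ℝ} {h : ℝ}
    (hu : Tendsto (fun n : ℕ => u n / n) atTop (𝓝 h)) (L : ℕ) :
    Tendsto (fun n : ℕ => ((n : ℝ) + 1)⁻¹ * u (n + 1 + L)) atTop (𝓝 h) := by
  have hratio : Tendsto (fun n : ℕ => 1 + L * (1 / ((n : ℝ) + 1))) atTop (𝓝 1) := by
    simpa using (tendsto_one_div_add_atTop_nhds_zero_nat.const_mul (L : ℝ)).const_add 1
  have hprod := (hu.comp (tendsto_add_atTop_nat (1 + L))).mul hratio
  rw [mul_one] at hprod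
  refine hprod.congr fun n => ?_
  simp only [Function.comp_apply, ← add_assoc]
  push_cast
  field_simp

variable {E κ : Type*} [Fintype E] [MeasurableSpace E] [MeasurableSingletonClass E] [Fintype κ]
  [MeasurableSpace κ] [MeasurableSingletonClass κ] {M : Measure (ℤ → E)}

theorem partEntropy_subword_eq (hM : MeasurePreserving shift M M) (s : ℤ) (n : ℕ) :
    partEntropy M (subword s n) = partEntropy M (subword 0 n) := by
  have hstep (s : ℤ) : partEntropy M (subword (s + 1) n) = partEntropy M (subword s n) := by
    rw [← partEntropy_comp hM (measurable_subword s n)]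
    congr 1
    funext σ
    exact (subword_shift s n σ).symm
  induction s with
  | zero => rfl
  | succ s ih => rw [hstep, ih]
  | pred s ih => rw [← ih, ← hstep, sub_add_cancel]

variable [IsProbabilityMeasure M]

theorem subadditive_partEntropy_subword (hM : MeasurePreserving shift M M) :
    Subadditive fun n => partEntropy M (subword 0 n) := by
  intro m n
  have hfac : (subword (E := E) 0 (m + n)).FactorsThrough
      fun σ => (subword 0 m σ, subword (m : ℤ) n σ) := by
    intro σ τ h
    obtain ⟨hm, hn⟩ := Prod.mk.inj h
    refine subword_eq_iff.2 fun i hi hi' => ?_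
    rcases lt_or_ge i m with him | him
    · exact subword_eq_iff.1 hm i hi (by omega)
    · exact subword_eq_iff.1 hn i him (by push_cast at hi'; omega)
  calc partEntropy M (subword 0 (m + n))
      ≤ partEntropy M fun σ => (subword 0 m σ, subword (m : ℤ) n σ) :=
        partEntropy_le_of_factorsThrough (measurable_subword _ _)
          ((measurable_subword _ _).prodMk (measurable_subword _ _)) hfac
    _ ≤ partEntropy M (subword 0 m) + partEntropy M (subword m n) :=
        partEntropy_prodMk_le_add (measurable_subword _ _) (measurable_subword _ _)
    _ = partEntropy M (subword 0 m) + partEntropy M (subword 0 n) := by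
        rw [partEntropy_subword_eq hM m]

theorem partEntropy_itinerary_le_of_dependsOn (hM : MeasurePreserving shift M M)
    {π : (ℤ → E) → κ} (hπ : Measurable π) {I : Finset ℤ} (hI : DependsOn π I) :
    ∃ L, ∀ n, partEntropy M (itinerary shift π n) ≤ partEntropy M (subword 0 (n + L)) := by
  obtain ⟨s, L, r, -, hr⟩ := exists_restrict_eq_comp_subword (E := E) I
  refine ⟨L, fun n => ?_⟩
  rw [← partEntropy_subword_eq hM s]
  refine partEntropy_le_of_factorsThrough (measurable_itinerary measurable_shift hπ n)
    (measurable_subword _ _) fun σ τ h => funext fun j => hI fun i hi => ?_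
  have hword : subword s L (shift^[j] σ) = subword s L (shift^[j] τ) :=
    subword_eq_iff.2 fun i hi hi' => by
      simp only [shift_iterate_apply]
      exact subword_eq_iff.1 h _ (by omega) (by push_cast; omega)
  have hrestrict : I.restrict (shift^[j] σ) = I.restrict (shift^[j] τ) := by
    simp only [hr, Function.comp_apply, hword]
  exact congrFun hrestrict ⟨i, hi⟩

theorem partEntropy_itinerary_le (hM : MeasurePreserving shift M M) {π : (ℤ → E) → κ}
    (hπ : Measurable π) {ε : ℝ} (hε : 0 < ε) :
    ∃ L, ∀ n,
      partEntropy M (itinerary shift π n) ≤ partEntropy M (subword 0 (n + L)) + n * ε := by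
  have : Nonempty κ := M.nonempty_of_neZero.map π
  obtain ⟨θ, hθε, hθ1, hθ0⟩ :=
    (((tendsto_log_add_mul_neg_log (Fintype.card κ)).eventually_lt_const hε).and
      ((eventually_nhdsWithin_of_eventually_nhds (eventually_lt_nhds one_pos)).and
        self_mem_nhdsWithin)).exists
  obtain ⟨I, π', hπ', hI, hne⟩ := exists_dependsOn_measureReal_ne_le M hπ hθ0
  obtain ⟨L, hL⟩ := partEntropy_itinerary_le_of_dependsOn hM hπ' hI
  have herr (j : ℕ) : M.real {σ | π (shift^[j] σ) ≠ π' (shift^[j] σ)} ≤ θ := by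
    refine le_trans (le_of_eq ?_) hne
    exact (hM.iterate j).measureReal_preimage (measurableSet_eq_fun hπ hπ').compl.nullMeasurableSet
  have hlogθ : 0 ≤ -Real.log θ := neg_nonneg.2 (Real.log_nonpos hθ0.le hθ1.le)
  refine ⟨L, fun n => ?_⟩
  calc partEntropy M (itinerary shift π n)
      ≤ partEntropy M (itinerary shift π' n) +
          ∑ j : Fin n, (Real.log (1 + Fintype.card κ * θ) +
            M.real {σ | π (shift^[j] σ) ≠ π' (shift^[j] σ)} * -Real.log θ) :=
        partEntropy_pi_le_add_sum (measurable_itinerary measurable_shift hπ n)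
          (measurable_itinerary measurable_shift hπ' n) hθ0
    _ ≤ partEntropy M (subword 0 (n + L)) + ∑ _j : Fin n, ε := by
        refine add_le_add (hL n) (Finset.sum_le_sum fun j _ => le_trans ?_ hθε.le)
        exact add_le_add_right (mul_le_mul_of_nonneg_right (herr j) hlogθ) _
    _ = partEntropy M (subword 0 (n + L)) + n * ε := by simp

theorem ksEntropy_shift_le {h : ℝ} (hM : MeasurePreserving shift M M)
    (hh : Tendsto (fun n : ℕ => partEntropy M (subword 0 n) / n) atTop (𝓝 h)) :
    ksEntropy M shift ≤ ENNReal.ofReal h := by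
  refine iSup_le fun k => iSup_le fun π => iSup_le fun hπ => ?_
  refine ENNReal.le_of_forall_pos_le_add fun ε hε _ => ?_
  obtain ⟨L, hL⟩ := partEntropy_itinerary_le hM (measurable_to_countable' hπ)
    (NNReal.coe_pos.2 hε)
  have hlim := ENNReal.tendsto_ofReal ((tendsto_inv_mul_comp_add hh L).add_const (ε : ℝ))
  refine le_trans (ge_of_tendsto' hlim fun n => iInf_le_of_le n (ENNReal.ofReal_le_ofReal ?_))
    (ENNReal.ofReal_add_le.trans_eq (by simp))
  have hn : (0 : ℝ) < n + 1 := by positivity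
  rw [inv_mul_le_iff₀ hn, mul_add, mul_inv_cancel_left₀ hn.ne']
  exact_mod_cast hL (n + 1)

theorem le_ksEntropy_shift {h : ℝ} (hM : MeasurePreserving shift M M)
    (hh : Tendsto (fun n : ℕ => partEntropy M (subword 0 n) / n) atTop (𝓝 h)) :
    ENNReal.ofReal h ≤ ksEntropy M shift := by
  set π : (ℤ → E) → Fin (Fintype.card E) := fun σ => Fintype.equivFin E (σ 0)
  have hπ : Measurable π := (measurable_of_finite _).comp (measurable_pi_apply 0)
  have hsub := subadditive_partEntropy_subword hM
  have hbdd : BddBelow (Set.range fun n : ℕ => partEntropy M (subword (E := E) 0 n) / n) := by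
    refine ⟨0, Set.forall_mem_range.2 fun n => div_nonneg ?_ n.cast_nonneg⟩
    rw [partEntropy_eq_shannonEntropy]
    exact shannonEntropy_nonneg (measureReal_fiber_mem_stdSimplex (measurable_subword 0 n))
  refine le_iSup_of_le _ <| le_iSup_of_le π <|
    le_iSup_of_le (fun j => hπ (measurableSet_singleton j)) <|
    le_iInf fun n => ENNReal.ofReal_le_ofReal ?_
  have hfac : (subword (E := E) 0 (n + 1)).FactorsThrough (itinerary shift π (n + 1)) :=
    fun σ τ hστ => funext fun j => by
      simpa [subword, itinerary, π, shift_iterate_apply] using congrFun hστ j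
  calc h = hsub.lim := tendsto_nhds_unique hh (hsub.tendsto_lim hbdd)
    _ ≤ partEntropy M (subword (E := E) 0 (n + 1)) / ↑(n + 1) := hsub.lim_le_div hbdd n.succ_ne_zero
    _ = ((n : ℝ) + 1)⁻¹ * partEntropy M (subword (E := E) 0 (n + 1)) := by
        rw [div_eq_inv_mul, Nat.cast_succ]
    _ ≤ ((n : ℝ) + 1)⁻¹ * partEntropy M (itinerary shift π (n + 1)) := by
        refine mul_le_mul_of_nonneg_left ?_ (by positivity)
        exact partEntropy_le_of_factorsThrough (measurable_subword _ _)
          (measurable_itinerary measurable_shift hπ _) hfac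

theorem ksEntropy_shift_eq {h : ℝ} (hM : MeasurePreserving shift M M)
    (hh : Tendsto (fun n : ℕ => partEntropy M (subword 0 n) / n) atTop (𝓝 h)) :
    ksEntropy M shift = ENNReal.ofReal h :=
  (ksEntropy_shift_le hM hh).antisymm (le_ksEntropy_shift hM hh)

end KolmogorovSinai

theorem DiniContinuous.exists_forall_abs_sub_le {X : Type*} [PseudoMetricSpace X] {h : X → ℝ}
    (hh : DiniContinuous h) {η : ℝ} (hη : 0 < η) :
    ∃ t > 0, ∀ x y, dist x y ≤ t → |h x - h y| ≤ η := by
  -- Otherwise the modulus stays above `η`, and `η / t` is not integrable at `0`.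
  by_contra! hcon
  obtain ⟨c, hc, hlt⟩ := hh
  have hmod (t : ℝ) (ht : 0 < t) : ENNReal.ofReal η ≤ modulus h t := by
    obtain ⟨x, y, hxy, hη'⟩ := hcon t ht
    exact (ENNReal.ofReal_le_ofReal hη'.le).trans
      (le_iSup_of_le x (le_iSup_of_le y (le_iSup_of_le hxy le_rfl)))
  have hlintegral : ∫⁻ t in Set.Ioc (0 : ℝ) c, ENNReal.ofReal (η * t⁻¹) < ⊤ := by
    refine lt_of_le_of_lt (setLIntegral_mono' measurableSet_Ioc fun t ht => ?_) hlt
    rw [ENNReal.ofReal_mul hη.le, ENNReal.ofReal_inv_of_pos ht.1, div_eq_mul_inv]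
    exact mul_le_mul_left (hmod t ht.1) _
  have hint : IntegrableOn (fun t : ℝ => η * t⁻¹) (Set.Ioc 0 c) := by
    refine ⟨by fun_prop, (hasFiniteIntegral_iff_ofReal ?_).2 hlintegral⟩
    filter_upwards [ae_restrict_mem measurableSet_Ioc] with t ht
    exact mul_nonneg hη.le (inv_nonneg.2 ht.1.le)
  have hinv : IntegrableOn (fun t : ℝ => t⁻¹) (Set.Ioc 0 c) := by
    simpa [IntegrableOn, hη.ne'] using hint.const_mul η⁻¹
  rw [← intervalIntegrable_iff_integrableOn_Ioc_of_le hc.le, intervalIntegrable_inv_iff] at hinv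
  exact hinv.elim hc.ne fun h0 => h0 Set.left_mem_uIcc

theorem DiniContinuous.uniformContinuous {X : Type*} [PseudoMetricSpace X] {h : X → ℝ}
    (hh : DiniContinuous h) : UniformContinuous h := by
  refine Metric.uniformContinuous_iff_le.2 fun η hη => ?_
  obtain ⟨t, ht, hle⟩ := hh.exists_forall_abs_sub_le hη
  exact ⟨t, ht, fun x y hxy => hle x y hxy⟩

theorem tendsto_div_zero_of_forall_le {u : ℕ → ℝ} (hu : ∀ n, 0 ≤ u n)
    (h : ∀ ε > 0, ∃ C, ∀ n, u n ≤ n * ε + C) :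
    Tendsto (fun n : ℕ => u n / n) atTop (𝓝 0) := by
  refine tendsto_order.2 ⟨fun b hb => .of_forall fun n => hb.trans_le (by have := hu n; positivity),
    fun b hb => ?_⟩
  obtain ⟨C, hC⟩ := h (b / 2) (half_pos hb)
  filter_upwards [(tendsto_const_div_atTop_nhds_zero_nat C).eventually_lt_const (half_pos hb),
    eventually_gt_atTop 0] with n hn hn0
  have hn0' : (0 : ℝ) < n := by exact_mod_cast hn0
  rw [div_lt_iff₀ hn0'] at hn ⊢
  linarith [hC n]

namespace MarkovSystem

variable {K : Type*} [MetricSpace K] [MeasurableSpace K] {N : ℕ} {E : Type*} [Fintype E]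
  (sys : MarkovSystem K N E)

/-- The vertex of the cell of the partition `K_1, …, K_N` that contains `x`. -/
noncomputable def cell (x : K) : Fin N := (sys.Ki_cover x).choose

/-- The probability vector `e ↦ p_e(x)`: the law of the first edge chosen at `x`. -/
def edgeLaw (x : K) : E → ℝ := fun e => sys.p e x

/-- The law of the first `n` edges of the random walk started at `x`. -/
def wordLaw (n : ℕ) (x : K) : (Fin n → E) → ℝ := fun f => wordProb sys.w sys.p (List.ofFn f) x

variable {sys} {x y : K} {e : E} {n : ℕ}

theorem mem_Ki_iff {v : Fin N} : x ∈ sys.Ki v ↔ sys.cell x = v := by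
  have hcell : x ∈ sys.Ki (sys.cell x) := (sys.Ki_cover x).choose_spec
  refine ⟨fun hx => ?_, fun h => h ▸ hcell⟩
  by_contra hne
  exact Set.disjoint_left.1 (sys.Ki_disjoint _ _ hne) hcell hx

theorem cell_w (h : sys.cell x = sys.edgeI e) : sys.cell (sys.w e x) = sys.edgeT e :=
  mem_Ki_iff.1 (sys.w_mapsTo e (mem_Ki_iff.2 h))

theorem cell_eq_edgeI_of_p_ne_zero (h : sys.p e x ≠ 0) : sys.cell x = sys.edgeI e :=
  mem_Ki_iff.1 (not_imp_comm.1 (sys.p_eq_zero e x) h)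

theorem wordLaw_cons (f : Fin n → E) :
    sys.wordLaw (n + 1) x (Fin.cons e f) = sys.p e x * sys.wordLaw n (sys.w e x) f := by
  simp [wordLaw, List.ofFn_succ, wordProb]

theorem wordLaw_succ_comp_consEquiv :
    sys.wordLaw (n + 1) x ∘ Fin.consEquiv (fun _ => E) =
      fun z : E × (Fin n → E) => sys.edgeLaw x z.1 * sys.wordLaw n (sys.w z.1 x) z.2 :=
  funext fun _ => wordLaw_cons _

variable (sys)

theorem edgeLaw_mem_stdSimplex (x : K) : sys.edgeLaw x ∈ stdSimplex ℝ E :=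
  ⟨fun e => sys.p_nonneg e x, sys.p_sum_one x⟩

theorem wordLaw_mem_stdSimplex (n : ℕ) (x : K) : sys.wordLaw n x ∈ stdSimplex ℝ (Fin n → E) := by
  induction n generalizing x with
  | zero => simp [stdSimplex, wordLaw, wordProb]
  | succ n ih =>
    constructor
    · refine Fin.consCases fun e f => ?_
      rw [wordLaw_cons]
      exact mul_nonneg (sys.p_nonneg e x) ((ih _).1 f)
    · rw [← (Fin.consEquiv fun _ => E).sum_comp (sys.wordLaw (n + 1) x)]
      calc ∑ z, (sys.wordLaw (n + 1) x ∘ Fin.consEquiv fun _ => E) z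
          = ∑ e, sys.p e x * ∑ f, sys.wordLaw n (sys.w e x) f := by
            simp only [wordLaw_succ_comp_consEquiv, Fintype.sum_prod_type, Finset.mul_sum, edgeLaw]
        _ = 1 := by simp only [(ih _).2, mul_one, sys.p_sum_one]

theorem measurable_edgeLaw : Measurable sys.edgeLaw := measurable_pi_iff.2 sys.p_measurable

theorem measurable_wordLaw (n : ℕ) : Measurable (sys.wordLaw n) := by
  refine measurable_pi_iff.2 fun f => ?_
  induction n with
  | zero => exact measurable_const
  | succ n ih =>
    induction f using Fin.consCases with | cons e f
    simp only [wordLaw_cons]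
    exact (sys.p_measurable e).mul ((ih f).comp (sys.w_measurable e))

theorem measurable_cell : Measurable sys.cell :=
  measurable_to_countable' fun v => by
    convert sys.Ki_measurable v
    ext x
    exact mem_Ki_iff.symm

theorem shannonEntropy_wordLaw_succ (n : ℕ) (x : K) :
    shannonEntropy (sys.wordLaw (n + 1) x) = shannonEntropy (sys.edgeLaw x) +
      ∑ e, sys.p e x * shannonEntropy (sys.wordLaw n (sys.w e x)) := by
  rw [← shannonEntropy_comp_equiv (Fin.consEquiv fun _ => E), wordLaw_succ_comp_consEquiv,
    shannonEntropy_chain (P := sys.edgeLaw x) (Q := fun e => sys.wordLaw n (sys.w e x))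
      fun e => (sys.wordLaw_mem_stdSimplex n _).2]
  rfl

section Invariant

variable {sys} {μ : Measure K}

theorem integral_shannonEntropy_wordLaw (hμ : sys.IsInvariant μ) (n : ℕ) :
    ∫ x, shannonEntropy (sys.wordLaw n x) ∂μ = n * ∫ x, shannonEntropy (sys.edgeLaw x) ∂μ := by
  have := hμ.1
  have hword (n : ℕ) := integrable_shannonEntropy (μ := μ) (sys.measurable_wordLaw n)
    (sys.wordLaw_mem_stdSimplex n)
  have hedge := integrable_shannonEntropy (μ := μ) sys.measurable_edgeLaw
    sys.edgeLaw_mem_stdSimplex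
  induction n with
  | zero => simp [shannonEntropy, wordLaw, wordProb]
  | succ n ih =>
    have hinv := hμ.2 (fun x => shannonEntropy (sys.wordLaw n x))
      (measurable_shannonEntropy.comp (sys.measurable_wordLaw n))
      ⟨_, fun x => abs_shannonEntropy_le_card (sys.wordLaw_mem_stdSimplex n x)⟩
    have hstep (x : K) : ∑ e, sys.p e x * shannonEntropy (sys.wordLaw n (sys.w e x)) =
        shannonEntropy (sys.wordLaw (n + 1) x) - shannonEntropy (sys.edgeLaw x) :=
      eq_sub_of_add_eq' (sys.shannonEntropy_wordLaw_succ n x).symm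
    simp only [hstep] at hinv
    rw [integral_sub (hword (n + 1)) hedge, ih] at hinv
    push_cast
    linarith

theorem integral_shannonEntropy_edgeLaw [IsFiniteMeasure μ] :
    ∫ x, shannonEntropy (sys.edgeLaw x) ∂μ =
      -∑ e, ∫ x in sys.Ki (sys.edgeI e), sys.p e x * Real.log (sys.p e x) ∂μ := by
  have hedge (e : E) : ∫ x in sys.Ki (sys.edgeI e), sys.p e x * Real.log (sys.p e x) ∂μ =
      ∫ x, sys.p e x * Real.log (sys.p e x) ∂μ :=
    setIntegral_eq_integral_of_forall_compl_eq_zero fun x hx => by simp [sys.p_eq_zero e x hx]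
  simp only [shannonEntropy, hedge]
  rw [integral_finsetSum _ fun e _ => integrable_negMulLog_of_mem_stdSimplex
    sys.measurable_edgeLaw sys.edgeLaw_mem_stdSimplex e]
  simp only [edgeLaw, negMulLog, neg_mul, integral_neg, Finset.sum_neg_distrib]

end Invariant

section RelativeEntropy

variable {sys}

theorem support_edgeLaw_subset (hpos : ∀ e, ∀ x ∈ sys.Ki (sys.edgeI e), 0 < sys.p e x)
    (hxy : sys.cell x = sys.cell y) : support (sys.edgeLaw x) ⊆ support (sys.edgeLaw y) :=
  fun e he => (hpos e y (mem_Ki_iff.2 (hxy ▸ cell_eq_edgeI_of_p_ne_zero he))).ne'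

theorem cell_w_eq_cell_w (hxy : sys.cell x = sys.cell y) (he : sys.p e x ≠ 0) :
    sys.cell (sys.w e x) = sys.cell (sys.w e y) := by
  have hx := cell_eq_edgeI_of_p_ne_zero he
  rw [cell_w hx, cell_w (hxy ▸ hx)]

theorem support_wordLaw_subset (hpos : ∀ e, ∀ x ∈ sys.Ki (sys.edgeI e), 0 < sys.p e x)
    (n : ℕ) (hxy : sys.cell x = sys.cell y) :
    support (sys.wordLaw n x) ⊆ support (sys.wordLaw n y) := by
  induction n generalizing x y with
  | zero => exact subset_rfl
  | succ n ih =>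
    refine Fin.consCases fun e f hf => ?_
    rw [Function.mem_support, wordLaw_cons] at hf ⊢
    have he := left_ne_zero_of_mul hf
    exact mul_ne_zero (support_edgeLaw_subset hpos hxy he)
      (ih (cell_w_eq_cell_w hxy he) (right_ne_zero_of_mul hf))

theorem relEntropy_wordLaw_succ (hpos : ∀ e, ∀ x ∈ sys.Ki (sys.edgeI e), 0 < sys.p e x)
    (n : ℕ) (hxy : sys.cell x = sys.cell y) :
    relEntropy (sys.wordLaw (n + 1) x) (sys.wordLaw (n + 1) y) =
      relEntropy (sys.edgeLaw x) (sys.edgeLaw y) +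
        ∑ e, sys.p e x * relEntropy (sys.wordLaw n (sys.w e x)) (sys.wordLaw n (sys.w e y)) := by
  rw [← relEntropy_comp_equiv (Fin.consEquiv fun _ => E), wordLaw_succ_comp_consEquiv,
    wordLaw_succ_comp_consEquiv, relEntropy_chain
      (fun e => (sys.wordLaw_mem_stdSimplex n _).2) (support_edgeLaw_subset hpos hxy)
      fun e he => support_wordLaw_subset hpos n (cell_w_eq_cell_w hxy he)]
  rfl

-- `Φ` is a Lyapunov function that absorbs the excess of the one-step cost over `ε`.
theorem relEntropy_wordLaw_le (hpos : ∀ e, ∀ x ∈ sys.Ki (sys.edgeI e), 0 < sys.p e x)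
    {Φ : K → K → ℝ} {ε : ℝ} (hΦ : ∀ x y, 0 ≤ Φ x y)
    (hstep : ∀ x y, sys.cell x = sys.cell y → relEntropy (sys.edgeLaw x) (sys.edgeLaw y) +
      ∑ e, sys.p e x * Φ (sys.w e x) (sys.w e y) ≤ ε + Φ x y)
    (n : ℕ) (hxy : sys.cell x = sys.cell y) :
    relEntropy (sys.wordLaw n x) (sys.wordLaw n y) ≤ n * ε + Φ x y := by
  induction n generalizing x y with
  | zero => simpa [relEntropy, crossEntropy, shannonEntropy, wordLaw, wordProb] using hΦ x y
  | succ n ih =>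
    calc relEntropy (sys.wordLaw (n + 1) x) (sys.wordLaw (n + 1) y)
        = relEntropy (sys.edgeLaw x) (sys.edgeLaw y) + ∑ e, sys.p e x *
            relEntropy (sys.wordLaw n (sys.w e x)) (sys.wordLaw n (sys.w e y)) :=
          relEntropy_wordLaw_succ hpos n hxy
      _ ≤ relEntropy (sys.edgeLaw x) (sys.edgeLaw y) +
            ∑ e, sys.p e x * (n * ε + Φ (sys.w e x) (sys.w e y)) := by
          refine add_le_add_right (Finset.sum_le_sum fun e _ => ?_) _
          rcases eq_or_ne (sys.p e x) 0 with he | he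
          · simp [he]
          · exact mul_le_mul_of_nonneg_left (ih (cell_w_eq_cell_w hxy he)) (sys.p_nonneg e x)
      _ = n * ε + (relEntropy (sys.edgeLaw x) (sys.edgeLaw y) +
            ∑ e, sys.p e x * Φ (sys.w e x) (sys.w e y)) := by
          simp only [mul_add, Finset.sum_add_distrib, ← Finset.sum_mul, sys.p_sum_one, one_mul]
          ring
      _ ≤ ↑(n + 1) * ε + Φ x y := by
          push_cast
          linarith [hstep x y hxy]

variable {δ : ℝ}

theorem log_p_sub_log_p_le_abs_log (hδpos : 0 < δ)
    (hδ : ∀ e, ∀ x ∈ sys.Ki (sys.edgeI e), δ ≤ sys.p e x) (hx : x ∈ sys.Ki (sys.edgeI e))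
    (hy : y ∈ sys.Ki (sys.edgeI e)) :
    Real.log (sys.p e x) - Real.log (sys.p e y) ≤ |Real.log δ| := by
  have hpx : Real.log (sys.p e x) ≤ 0 := Real.log_nonpos (hδpos.le.trans (hδ e x hx))
    (mem_Icc_of_mem_stdSimplex (sys.edgeLaw_mem_stdSimplex x) e).2
  have hpy := Real.log_le_log hδpos (hδ e y hy)
  linarith [neg_le_abs (Real.log δ)]

theorem log_p_sub_log_p_le_div (hδpos : 0 < δ)
    (hδ : ∀ e, ∀ x ∈ sys.Ki (sys.edgeI e), δ ≤ sys.p e x) (hx : x ∈ sys.Ki (sys.edgeI e))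
    (hy : y ∈ sys.Ki (sys.edgeI e)) :
    Real.log (sys.p e x) - Real.log (sys.p e y) ≤ |sys.p e x - sys.p e y| / δ := by
  have hpx := hδpos.trans_le (hδ e x hx)
  have hpy := hδpos.trans_le (hδ e y hy)
  calc Real.log (sys.p e x) - Real.log (sys.p e y)
      = Real.log (sys.p e x / sys.p e y) := (Real.log_div hpx.ne' hpy.ne').symm
    _ ≤ sys.p e x / sys.p e y - 1 := Real.log_le_sub_one_of_pos (div_pos hpx hpy)
    _ = (sys.p e x - sys.p e y) / sys.p e y := by field_simp
    _ ≤ |sys.p e x - sys.p e y| / δ :=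
      div_le_div₀ (abs_nonneg _) (le_abs_self _) hδpos (hδ e y hy)

theorem relEntropy_edgeLaw_le_abs_log (hδpos : 0 < δ)
    (hδ : ∀ e, ∀ x ∈ sys.Ki (sys.edgeI e), δ ≤ sys.p e x) (hxy : sys.cell x = sys.cell y) :
    relEntropy (sys.edgeLaw x) (sys.edgeLaw y) ≤ |Real.log δ| := by
  refine relEntropy_le_of_forall_log_sub_log_le (sys.edgeLaw_mem_stdSimplex x) fun e he => ?_
  have hx := cell_eq_edgeI_of_p_ne_zero he
  exact log_p_sub_log_p_le_abs_log hδpos hδ (mem_Ki_iff.2 hx) (mem_Ki_iff.2 (hxy ▸ hx))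

theorem relEntropy_wordLaw_le_mul_abs_log (hδpos : 0 < δ)
    (hδ : ∀ e, ∀ x ∈ sys.Ki (sys.edgeI e), δ ≤ sys.p e x) (n : ℕ) (hxy : sys.cell x = sys.cell y) :
    relEntropy (sys.wordLaw n x) (sys.wordLaw n y) ≤ n * |Real.log δ| := by
  simpa using relEntropy_wordLaw_le (fun e x hx => hδpos.trans_le (hδ e x hx)) (Φ := 0)
    (fun _ _ => le_rfl) (fun x y h => by simpa using relEntropy_edgeLaw_le_abs_log hδpos hδ h) n hxy

theorem exists_relEntropy_edgeLaw_le_add_mul_dist (hδpos : 0 < δ)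
    (hδ : ∀ e, ∀ x ∈ sys.Ki (sys.edgeI e), δ ≤ sys.p e x)
    (hcont : ∀ e, UniformContinuousOn (sys.p e) (sys.Ki (sys.edgeI e))) {ε : ℝ} (hε : 0 < ε) :
    ∃ B ≥ 0, ∀ x y, sys.cell x = sys.cell y →
      relEntropy (sys.edgeLaw x) (sys.edgeLaw y) ≤ ε + B * dist x y := by
  choose t ht htp using fun e =>
    Metric.uniformContinuousOn_iff.1 (hcont e) (ε * δ) (mul_pos hε hδpos)
  obtain ⟨t₀, ht₀, ht₀le⟩ : ∃ t₀ > 0, ∀ e, t₀ ≤ t e := by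
    rcases isEmpty_or_nonempty E with hE | hE
    · exact ⟨1, one_pos, hE.elim⟩
    · obtain ⟨e₀, he₀⟩ := Finite.exists_min t
      exact ⟨t e₀, ht e₀, he₀⟩
  refine ⟨|Real.log δ| / t₀, by positivity, fun x y hxy => ?_⟩
  rcases lt_or_ge (dist x y) t₀ with hd | hd
  · refine (relEntropy_le_of_forall_log_sub_log_le (sys.edgeLaw_mem_stdSimplex x)
      fun e he => ?_).trans (le_add_of_nonneg_right (by positivity))
    have hx := mem_Ki_iff.2 (cell_eq_edgeI_of_p_ne_zero he)
    have hy := mem_Ki_iff.2 (hxy ▸ cell_eq_edgeI_of_p_ne_zero he)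
    exact (log_p_sub_log_p_le_div hδpos hδ hx hy).trans
      ((div_le_iff₀ hδpos).2 (htp e x hx y hy (hd.trans_le (ht₀le e))).le)
  · have hfar : |Real.log δ| ≤ |Real.log δ| / t₀ * dist x y := by
      rw [div_mul_eq_mul_div, le_div_iff₀ ht₀]
      exact mul_le_mul_of_nonneg_left hd (abs_nonneg _)
    linarith [relEntropy_edgeLaw_le_abs_log hδpos hδ hxy]

variable {a : ℝ}

theorem tendsto_relEntropy_wordLaw_div (hδpos : 0 < δ)
    (hδ : ∀ e, ∀ x ∈ sys.Ki (sys.edgeI e), δ ≤ sys.p e x)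
    (hcont : ∀ e, UniformContinuousOn (sys.p e) (sys.Ki (sys.edgeI e)))
    (ha1 : a < 1) (hcontr : sys.ContractiveOnAvg a)
    (hxy : sys.cell x = sys.cell y) :
    Tendsto (fun n : ℕ => relEntropy (sys.wordLaw n x) (sys.wordLaw n y) / n) atTop (𝓝 0) := by
  have hpos (e : E) (x : K) (hx : x ∈ sys.Ki (sys.edgeI e)) := hδpos.trans_le (hδ e x hx)
  refine tendsto_div_zero_of_forall_le (fun n => relEntropy_nonneg (sys.wordLaw_mem_stdSimplex n x)
    (sys.wordLaw_mem_stdSimplex n y) (support_wordLaw_subset hpos n hxy)) fun ε hε => ?_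
  obtain ⟨B, hB, hstep⟩ := exists_relEntropy_edgeLaw_le_add_mul_dist hδpos hδ hcont hε
  have h1a : 0 < 1 - a := sub_pos.2 ha1
  -- With `Φ = C * dist`, contraction on average makes `Φ` drop by `B * dist x y` in each step.
  set C := B / (1 - a)
  have hC : 0 ≤ C := div_nonneg hB h1a.le
  have hCB : C * (1 - a) = B := div_mul_cancel₀ B h1a.ne'
  refine ⟨C * dist x y, fun n => relEntropy_wordLaw_le hpos (Φ := fun x y => C * dist x y)
    (fun x y => mul_nonneg hC dist_nonneg) (fun x y h => ?_) n hxy⟩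
  have hdist := mul_le_mul_of_nonneg_left
    (hcontr _ x (mem_Ki_iff.2 rfl) y (mem_Ki_iff.2 h.symm)) hC
  calc relEntropy (sys.edgeLaw x) (sys.edgeLaw y) +
        ∑ e, sys.p e x * (C * dist (sys.w e x) (sys.w e y))
      = relEntropy (sys.edgeLaw x) (sys.edgeLaw y) +
        C * ∑ e, sys.p e x * dist (sys.w e x) (sys.w e y) := by
        simp only [Finset.mul_sum, mul_left_comm]
    _ ≤ (ε + C * (1 - a) * dist x y) + C * (a * dist x y) :=
        add_le_add (hCB ▸ hstep x y h) hdist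
    _ = ε + C * dist x y := by ring

theorem tendsto_integral_relEntropy_wordLaw_div (hδpos : 0 < δ)
    (hδ : ∀ e, ∀ x ∈ sys.Ki (sys.edgeI e), δ ≤ sys.p e x)
    (hcont : ∀ e, UniformContinuousOn (sys.p e) (sys.Ki (sys.edgeI e)))
    (ha1 : a < 1) (hcontr : sys.ContractiveOnAvg a)
    {μ : Measure K} [IsFiniteMeasure μ] {ys : Fin N → K} (hys : ∀ v, ys v ∈ sys.Ki v) :
    Tendsto (fun n : ℕ =>
      (∫ x, relEntropy (sys.wordLaw n x) (sys.wordLaw n (ys (sys.cell x))) ∂μ) / n)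
      atTop (𝓝 0) := by
  have hcell (x : K) : sys.cell x = sys.cell (ys (sys.cell x)) := (mem_Ki_iff.1 (hys _)).symm
  simp only [← integral_div]
  rw [← integral_zero K ℝ (μ := μ)]
  refine tendsto_integral_of_dominated_convergence (fun _ => |Real.log δ|) (fun n => ?_)
    (integrable_const _) (fun n => ae_of_all _ fun x => ?_) (ae_of_all _ fun x =>
      tendsto_relEntropy_wordLaw_div hδpos hδ hcont ha1 hcontr (hcell x))
  · exact ((integrable_relEntropy (R := fun v => sys.wordLaw n (ys v)) (sys.measurable_wordLaw n)
      (sys.wordLaw_mem_stdSimplex n) sys.measurable_cell).div_const n).aestronglyMeasurable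
  · have hnonneg := relEntropy_nonneg (sys.wordLaw_mem_stdSimplex n x)
      (sys.wordLaw_mem_stdSimplex n (ys (sys.cell x)))
      (support_wordLaw_subset (fun e x hx => hδpos.trans_le (hδ e x hx)) n (hcell x))
    rw [Real.norm_of_nonneg (div_nonneg hnonneg n.cast_nonneg)]
    refine div_le_of_le_mul₀ n.cast_nonneg (abs_nonneg _) ?_
    rw [mul_comm]
    exact relEntropy_wordLaw_le_mul_abs_log hδpos hδ n (hcell x)

theorem tendsto_shannonEntropy_integral_wordLaw_div (hδpos : 0 < δ)
    (hδ : ∀ e, ∀ x ∈ sys.Ki (sys.edgeI e), δ ≤ sys.p e x)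
    (hcont : ∀ e, UniformContinuousOn (sys.p e) (sys.Ki (sys.edgeI e)))
    (ha1 : a < 1) (hcontr : sys.ContractiveOnAvg a)
    {μ : Measure K} (hμ : sys.IsInvariant μ) :
    Tendsto (fun n : ℕ => shannonEntropy (fun f => ∫ x, sys.wordLaw n x f ∂μ) / n) atTop
      (𝓝 (∫ x, shannonEntropy (sys.edgeLaw x) ∂μ)) := by
  have := hμ.1
  choose ys hys using sys.Ki_nonempty
  set h := ∫ x, shannonEntropy (sys.edgeLaw x) ∂μ
  have hupper : Tendsto (fun n : ℕ => h +
      (∫ x, relEntropy (sys.wordLaw n x) (sys.wordLaw n (ys (sys.cell x))) ∂μ) / n +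
        Real.log (Fintype.card (Fin N)) / n) atTop (𝓝 h) := by
    simpa using ((tendsto_integral_relEntropy_wordLaw_div hδpos hδ hcont ha1 hcontr
      hys).const_add h).add (tendsto_const_div_atTop_nhds_zero_nat _)
  refine tendsto_of_tendsto_of_tendsto_of_le_of_le' tendsto_const_nhds hupper ?_ ?_ <;>
    filter_upwards [eventually_gt_atTop 0] with n hn <;>
    have hn' : (0 : ℝ) < n := Nat.cast_pos.2 hn
  · rw [le_div_iff₀' hn', ← integral_shannonEntropy_wordLaw hμ]
    exact integral_shannonEntropy_le (sys.measurable_wordLaw n) (sys.wordLaw_mem_stdSimplex n)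
  · have hle := shannonEntropy_integral_le (μ := μ) (R := fun v => sys.wordLaw n (ys v))
      (sys.measurable_wordLaw n) (sys.wordLaw_mem_stdSimplex n)
      (fun v => sys.wordLaw_mem_stdSimplex n (ys v)) sys.measurable_cell fun x =>
        support_wordLaw_subset (fun e x hx => hδpos.trans_le (hδ e x hx)) n
          (mem_Ki_iff.1 (hys _)).symm
    rw [integral_shannonEntropy_wordLaw hμ] at hle
    rw [div_le_iff₀ hn', add_mul, add_mul, div_mul_cancel₀ _ hn'.ne', div_mul_cancel₀ _ hn'.ne',
      mul_comm h]
    exact hle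

end RelativeEntropy

end MarkovSystem

namespace IsMarkovMeasure

variable {K : Type*} [MetricSpace K] [MeasurableSpace K] {N : ℕ} {E : Type*} [Fintype E]
  [MeasurableSpace E] {sys : MarkovSystem K N E} {μ : Measure K} {M : Measure (ℤ → E)}

theorem measure_subword_preimage (hM : IsMarkovMeasure sys μ M) (s : ℤ) {n : ℕ} (f : Fin n → E) :
    M (subword s n ⁻¹' {f}) = ENNReal.ofReal (∫ x, sys.wordLaw n x f ∂μ) := by
  have hset : subword s n ⁻¹' {f} = {σ : ℤ → E |
      ∀ j : Fin (List.ofFn f).length, σ (s + (j : ℕ)) = (List.ofFn f).get j} := by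
    ext σ
    simp [subword, funext_iff, Fin.forall_iff]
  rw [hset, hM.2 s (List.ofFn f)]
  rfl

theorem partEntropy_subword (hM : IsMarkovMeasure sys μ M) (s : ℤ) (n : ℕ) :
    partEntropy M (subword s n) = shannonEntropy fun f => ∫ x, sys.wordLaw n x f ∂μ := by
  simp only [partEntropy_eq_shannonEntropy, Measure.real, hM.measure_subword_preimage,
    ENNReal.toReal_ofReal (integral_nonneg fun x => (sys.wordLaw_mem_stdSimplex n x).1 _)]

theorem measurePreserving_shift [MeasurableSingletonClass E] (hM : IsMarkovMeasure sys μ M) :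
    MeasurePreserving shift M M := by
  have := hM.1
  refine measurePreserving_shift_of_map_subword fun s n =>
    Measure.ext_of_singleton fun f => ?_
  simp only [Measure.map_apply (measurable_subword _ n) (measurableSet_singleton f),
    hM.measure_subword_preimage]

end IsMarkovMeasure

theorem entropy_of_generalized_markov_shift_general
    {K : Type*} [MetricSpace K] [MeasurableSpace K]
    {N : ℕ} {E : Type*} [Fintype E] [MeasurableSpace E] [MeasurableSingletonClass E]
    (sys : MarkovSystem K N E) {a : ℝ} (ha1 : a < 1) (hcontr : sys.ContractiveOnAvg a)
    {δ : ℝ} (hδpos : 0 < δ) (hδ : ∀ e, ∀ x ∈ sys.Ki (sys.edgeI e), δ ≤ sys.p e x)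
    (hcont : ∀ e, UniformContinuousOn (sys.p e) (sys.Ki (sys.edgeI e)))
    {μ : Measure K} (hμ : sys.IsInvariant μ)
    {M : Measure (ℤ → E)} (hM : IsMarkovMeasure sys μ M) :
    ksEntropy M shift = ENNReal.ofReal
      (-∑ e : E, ∫ x in sys.Ki (sys.edgeI e), sys.p e x * Real.log (sys.p e x) ∂μ) := by
  have := hμ.1
  have := hM.1
  rw [← MarkovSystem.integral_shannonEntropy_edgeLaw]
  refine ksEntropy_shift_eq hM.measurePreserving_shift ?_
  simp only [hM.partEntropy_subword]
  exact MarkovSystem.tendsto_shannonEntropy_integral_wordLaw_div hδpos hδ hcont ha1 hcontr hμ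

/-- Entropy formula for the generalized Markov shift when the invariant measure is
unique: `h_M(S) = -∑_{e} ∫_{K_{i(e)}} p_e log p_e dμ`. -/
theorem entropy_of_generalized_markov_shift
    {K : Type*} [MetricSpace K] [MeasurableSpace K] [BorelSpace K]
    {N : ℕ} {E : Type*} [Fintype E] [MeasurableSpace E] [MeasurableSingletonClass E]
    (sys : MarkovSystem K N E) (a : ℝ) (ha0 : 0 < a) (ha1 : a < 1)
    (hcontr : sys.ContractiveOnAvg a)
    (hrelcpt : ∀ s : Set K, Bornology.IsBounded s → IsCompact (closure s))
    (hopen : ∀ v, IsOpen (sys.Ki v))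
    (δ : ℝ) (hδpos : 0 < δ)
    (hδ : ∀ e, ∀ x ∈ sys.Ki (sys.edgeI e), δ ≤ sys.p e x)
    (hdini : ∀ e, DiniContinuous fun x : sys.Ki (sys.edgeI e) => sys.p e (x : K))
    (hsurj : Function.Surjective sys.edgeI)
    (μ : Measure K) (hμ : sys.IsInvariant μ)
    (huniq : ∀ ν : Measure K, sys.IsInvariant ν → ν = μ)
    (M : Measure (ℤ → E)) (hM : IsMarkovMeasure sys μ M) :
    ksEntropy M shift = ENNReal.ofReal
      (-∑ e : E, ∫ x in sys.Ki (sys.edgeI e), sys.p e x * Real.log (sys.p e x) ∂μ) :=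
  entropy_of_generalized_markov_shift_general sys ha1 hcontr hδpos hδ
    (fun e => uniformContinuousOn_iff_restrict.2 (hdini e).uniformContinuous) hμ hM
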